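/- Assume p^2·e_0 − (p+1)·b_2 + (p−1)·b_1 > 0. For all 0 ≤ j, r < p^2, π_0^{−w_j}·Ψ^{(j)}·ρ_r ≡ π_0^{d_{j+r} − d_r − w_j}·ρ_{j+r} mod 𝔐_2^{p^2·e_0 − p·b_2 − (p^2−p+1)·b_1} (with ρ_{j+r} = 0 when j + r ≥ p^2); equality holds when there is no carry in adding the p-adic expansions of j and r. -/

import Mathlib

/-- A normalized discrete valuation on a field `K`, recorded as a function
`v : K → ℤ`.  The value of `v` at `0` is irrelevant: all conditions below only
refer to nonzero elements (the convention `v 0 = ∞` being understood). -/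
structure IsDiscVal {K : Type*} [Field K] (v : K → ℤ) : Prop where
  map_one : v 1 = 0
  map_mul : ∀ x y : K, x ≠ 0 → y ≠ 0 → v (x * y) = v x + v y
  min_le_add : ∀ x y : K, x ≠ 0 → y ≠ 0 → x + y ≠ 0 → min (v x) (v y) ≤ v (x + y)
  exists_uniformizer : ∃ π : K, π ≠ 0 ∧ v π = 1


/-! The operators are compared through how much they raise the valuation of `K₂`. By
Artin–Schreier theory `X = x₂ - μ x₁` has valuation `-b₂`, which is prime to `p`; so the powers of
`X` form a `K₀`-basis in which no term of an expansion has smaller valuation than the sum, and the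
amount by which `τ - 1` raises valuations can be read off `τ X - X`. This gives `b₁` for `τ = σ`
and `b₂` for `τ = σ ^ p`. Expanding `(1 + Ψ₂) ^ p = 1` and `(1 + Ψ₁) ^ p`, all of whose mixed
terms are divisible by `p`, shows that `Ψ₂ ^ p` and `Ψ₁ ^ p - Ψ₂` raise valuations by about
`v₂ p = p² e₀`. When `j` and `r` are added, a carry out of the lower digit costs one replacement of
`Ψ₁ ^ p` by `Ψ₂`, and a carry out of the upper digit leaves a multiple of `Ψ₂ ^ p`. -/

section Valuation

variable {Γ R : Type*} [LinearOrderedAddCommMonoidWithTop Γ] [Ring R]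

theorem val_sum_le_of_injOn (v : AddValuation R Γ) {ι : Type*} {s : Finset ι} {f : ι → R}
    (hinj : ∀ i ∈ s, ∀ j ∈ s, v (f i) = v (f j) → i = j ∨ v (f i) = ⊤) {j : ι} (hj : j ∈ s) :
    v (∑ i ∈ s, f i) ≤ v (f j) := by
  classical
  obtain ⟨i, hi, hmin⟩ := s.exists_min_image (fun i => v (f i)) ⟨j, hj⟩
  rcases eq_or_ne (v (f i)) ⊤ with htop | htop
  · exact (top_le_iff.1 (htop.ge.trans (hmin j hj))).ge.trans' le_top
  have hrest : v (f i) < v (∑ k ∈ s.erase i, f k) := v.map_lt_sum htop fun k hk => by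
    obtain ⟨hki, hk⟩ := Finset.mem_erase.1 hk
    exact (hmin k hk).lt_of_ne fun h => (hinj i hi k hk h).elim (hki ·.symm) htop
  rw [← Finset.add_sum_erase _ _ hi, v.map_add_eq_of_lt_left hrest]
  exact hmin j hj

variable {v : AddValuation R (WithTop ℤ)} {a b n : ℤ} {x y : R}

/-- `x` lies in the `n`-th power of the maximal ideal of `v`. -/
def ValGE (v : AddValuation R (WithTop ℤ)) (n : ℤ) (x : R) : Prop := (n : WithTop ℤ) ≤ v x

theorem valGE_of_val_eq (h : v x = n) : ValGE v n x := h.ge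

theorem exists_val_eq_of_not_valGE (h : ¬ ValGE v n x) : ∃ k < n, v x = k := by
  rw [ValGE, not_le] at h
  obtain ⟨k, hk⟩ := WithTop.ne_top_iff_exists.1 h.ne_top
  exact ⟨k, by rwa [← hk, WithTop.coe_lt_coe] at h, hk.symm⟩

theorem val_mul_eq (hx : v x = a) (hy : v y = b) : v (x * y) = (a + b : ℤ) := by
  rw [v.map_mul, hx, hy, WithTop.coe_add]

theorem val_pow_eq (hx : v x = a) (k : ℕ) : v (x ^ k) = (k * a : ℤ) := by
  rw [v.map_pow, hx, ← WithTop.coe_nsmul, nsmul_eq_mul]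

theorem val_zpow_eq {K : Type*} [Field K] {v : AddValuation K (WithTop ℤ)} {x : K} (hx : v x = a)
    (k : ℤ) : v (x ^ k) = (k * a : ℤ) := by
  obtain ⟨k, rfl | rfl⟩ := k.eq_nat_or_neg
  · rw [zpow_natCast, val_pow_eq hx]
  · rw [zpow_neg, zpow_natCast, v.map_inv, val_pow_eq hx, neg_mul]
    rfl

namespace ValGE

theorem le_of_val_eq (h : ValGE v n x) (hx : v x = a) : n ≤ a :=
  WithTop.coe_le_coe.1 (hx ▸ h)

theorem zero (n : ℤ) : ValGE v n 0 := v.map_zero.ge.trans' le_top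

theorem mono (h : ValGE v a x) (hba : b ≤ a) : ValGE v b x :=
  (WithTop.coe_le_coe.2 hba).trans h

theorem neg (h : ValGE v n x) : ValGE v n (-x) := h.trans_eq (v.map_neg x).symm

theorem add (hx : ValGE v n x) (hy : ValGE v n y) : ValGE v n (x + y) := v.map_le_add hx hy

theorem sub (hx : ValGE v n x) (hy : ValGE v n y) : ValGE v n (x - y) := v.map_le_sub hx hy

theorem sum {ι : Type*} {s : Finset ι} {f : ι → R} (h : ∀ i ∈ s, ValGE v n (f i)) :
    ValGE v n (∑ i ∈ s, f i) := v.map_le_sum h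

theorem mul (hx : ValGE v a x) (hy : ValGE v b y) : ValGE v (a + b) (x * y) := by
  rw [ValGE, v.map_mul, WithTop.coe_add]
  exact add_le_add hx hy

theorem one : ValGE v 0 1 := v.map_one.ge

theorem pow (hx : ValGE v a x) (k : ℕ) : ValGE v (k * a) (x ^ k) := by
  induction k with
  | zero => simpa using one
  | succ k ih => rw [pow_succ]; exact (ih.mul hx).mono (by push_cast; linarith)

theorem natCast (k : ℕ) : ValGE v 0 (k : R) := by
  induction k with
  | zero => simpa using zero 0
  | succ k ih => rw [Nat.cast_succ]; exact ih.add one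

theorem intCast (k : ℤ) : ValGE v 0 (k : R) := by
  obtain ⟨k, rfl | rfl⟩ := k.eq_nat_or_neg
  · simpa using natCast k
  · simpa using (natCast k).neg

end ValGE

theorem val_add_eq (hx : v x = n) (hy : ValGE v (n + 1) y) : v (x + y) = n := by
  rw [v.map_add_eq_of_lt_left, hx]
  exact hx.trans_lt ((WithTop.coe_lt_coe.2 (lt_add_one n)).trans_le hy)

theorem val_eq_of_pow {p : ℕ} (hp : p ≠ 0) (h : v (x ^ p) = (p * n : ℤ)) : v x = n := by
  have hx : v x ≠ ⊤ := fun hx => by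
    obtain ⟨q, rfl⟩ := Nat.exists_eq_succ_of_ne_zero hp
    rw [v.map_pow, hx, succ_nsmul, add_top] at h
    exact WithTop.top_ne_coe h
  obtain ⟨k, hk⟩ := WithTop.ne_top_iff_exists.1 hx
  rw [val_pow_eq hk.symm, WithTop.coe_inj] at h
  rw [← hk, mul_left_cancel₀ (by exact_mod_cast hp) h]

theorem val_natCast_eq_zero_of_coprime {p k : ℕ} (hp : ValGE v 1 (p : R)) (h : k.Coprime p) :
    v (k : R) = 0 := by
  suffices hk : ¬ ValGE v 1 (k : R) by
    obtain ⟨n, hn, hkn⟩ := exists_val_eq_of_not_valGE hk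
    have := (ValGE.natCast k).le_of_val_eq hkn
    rw [hkn, show n = 0 by omega, WithTop.coe_zero]
  intro hk
  obtain ⟨s, t, hst⟩ := Nat.isCoprime_iff_coprime.2 h
  have hone : ValGE v 1 ((s * k + t * p : ℤ) : R) := by
    push_cast
    exact (((ValGE.intCast s).mul hk).mono (by simp)).add
      (((ValGE.intCast t).mul hp).mono (by simp))
  rw [hst, Int.cast_one] at hone
  exact absurd (hone.le_of_val_eq v.map_one) (by simp)

theorem ValGE.pow_sub_pow {R : Type*} [CommRing R] {v : AddValuation R (WithTop ℤ)} {x y : R}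
    {t c : ℤ} (hx : ValGE v t x) (hy : ValGE v t y) (hxy : ValGE v (t + c) (x - y)) (k : ℕ) :
    ValGE v (k * t + c) (x ^ k - y ^ k) := by
  have hsum : ValGE v ((k - 1) * t) (∑ i ∈ Finset.range k, x ^ i * y ^ (k - 1 - i)) :=
    ValGE.sum fun i hi => ((hx.pow i).mul (hy.pow (k - 1 - i))).mono <| by
      have hik : i + 1 ≤ k := Finset.mem_range.1 hi
      rw [Nat.sub_sub, add_comm 1 i, Nat.cast_sub hik]
      push_cast
      linarith
  rw [← geom_sum₂_mul]
  exact (hsum.mul hxy).mono (by linarith)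

end Valuation

section DiscreteValuation

variable {K : Type*} [Field K] {v : K → ℤ}

open Classical in
/-- The additive valuation extending a discrete valuation by `v 0 = ∞`. -/
noncomputable def IsDiscVal.toAddValuation (hv : IsDiscVal v) : AddValuation K (WithTop ℤ) :=
  AddValuation.of (fun x => if x = 0 then ⊤ else (v x : WithTop ℤ)) (if_pos rfl)
    (by simp [hv.map_one])
    (fun x y => by
      rcases eq_or_ne x 0 with rfl | hx
      · simp
      rcases eq_or_ne y 0 with rfl | hy
      · simp
      rcases eq_or_ne (x + y) 0 with hxy | hxy
      · simp [hxy]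
      simpa [hx, hy, hxy] using hv.min_le_add x y hx hy hxy)
    (fun x y => by
      rcases eq_or_ne x 0 with rfl | hx
      · simp
      rcases eq_or_ne y 0 with rfl | hy
      · simp
      simp [hx, hy, hv.map_mul x y hx hy])

theorem IsDiscVal.toAddValuation_of_ne_zero (hv : IsDiscVal v) {x : K} (hx : x ≠ 0) :
    hv.toAddValuation x = v x := if_neg hx

theorem IsDiscVal.toAddValuation_algebraMap {F : Type*} [Field F] [Algebra F K] (hv : IsDiscVal v)
    {x : F} {n : ℤ} (hxn : v (algebraMap F K x) = n) (hx : x ≠ 0) :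
    hv.toAddValuation (algebraMap F K x) = n := by
  rw [hv.toAddValuation_of_ne_zero (by simpa using hx), hxn]

theorem IsDiscVal.valGE_toAddValuation_iff (hv : IsDiscVal v) {n : ℤ} {x : K} :
    ValGE hv.toAddValuation n x ↔ x = 0 ∨ n ≤ v x := by
  rcases eq_or_ne x 0 with rfl | hx
  · simp [ValGE.zero]
  · simp [ValGE, hv.toAddValuation_of_ne_zero hx, hx]

end DiscreteValuation

section ArtinSchreier

/-- The polynomial `D(x, y) = (x ^ p + y ^ p - (x + y) ^ p) / p` occurring in the addition of Witt
vectors of length two. The division is carried out on the binomial coefficients, so that `D` makes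
sense in every ring, in particular in rings of operators. -/
def wittD {R : Type*} [Ring R] (p : ℕ) (x y : R) : R :=
  -∑ k ∈ Finset.Ioo 0 p, x ^ k * y ^ (p - k) * ((p.choose k / p : ℕ) : R)

theorem add_pow_eq_sub_mul_wittD {R : Type*} [Ring R] {p : ℕ} (hp : p.Prime) {x y : R}
    (h : Commute x y) : (x + y) ^ p = x ^ p + y ^ p - p * wittD p x y := by
  rw [h.add_pow_prime_eq' hp, wittD, mul_neg, sub_neg_eq_add]

theorem div_eq_wittD {K : Type*} [Field K] {p : ℕ} (hp : p.Prime) (hp0 : (p : K) ≠ 0) (x y : K) :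
    (x ^ p + y ^ p - (x + y) ^ p) / p = wittD p x y := by
  rw [add_pow_eq_sub_mul_wittD hp (Commute.all x y), sub_sub_cancel, mul_div_cancel_left₀ _ hp0]

theorem map_wittD {R S G : Type*} [Ring R] [Ring S] [FunLike G R S] [RingHomClass G R S] (f : G)
    (p : ℕ) (x y : R) : f (wittD p x y) = wittD p (f x) (f y) := by
  simp only [wittD, map_neg, map_sum, map_mul, map_pow, map_natCast]

section Ring

variable {R : Type*} [Ring R] {v : AddValuation R (WithTop ℤ)} {p : ℕ} {a b k n : ℤ} {x y z : R}

theorem ValGE.wittD (hx : ValGE v a x) (hy : ValGE v b y) (h₁ : n ≤ a + (p - 1) * b)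
    (h₂ : n ≤ (p - 1) * a + b) : ValGE v n (wittD p x y) := by
  refine (ValGE.sum fun k hk => ?_).neg
  obtain ⟨hk₀, hkp⟩ := Finset.mem_Ioo.1 hk
  refine (((hx.pow k).mul (hy.pow (p - k))).mul (ValGE.natCast _)).mono ?_
  rw [Nat.cast_sub hkp.le, add_zero]
  rcases le_total a b with hab | hab <;> nlinarith

theorem val_pow_sub_self (hp : 1 < p) (hz : v z = k) (hk : k < 0) :
    v (z ^ p - z) = (p * k : ℤ) := by
  rw [sub_eq_add_neg]
  exact val_add_eq (val_pow_eq hz p) ((valGE_of_val_eq hz).neg.mono (by nlinarith))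

theorem valGE_of_pow_sub (hp : 1 < p) (hk : k ≤ 0) (h : ValGE v (p * k) (z ^ p - z)) :
    ValGE v k z := by
  by_contra hz
  obtain ⟨t, htk, hzt⟩ := exists_val_eq_of_not_valGE hz
  have := h.le_of_val_eq (val_pow_sub_self hp hzt (htk.trans_le hk))
  nlinarith

theorem val_eq_of_pow_sub (hp : 1 < p) (hk : k < 0) (h : v (z ^ p - z) = (p * k : ℤ)) :
    v z = k := by
  have hz : ¬ ValGE v 0 z := fun hz => by
    have := (((hz.pow p).mono (by simp)).sub hz).le_of_val_eq h
    nlinarith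
  obtain ⟨t, ht, hzt⟩ := exists_val_eq_of_not_valGE hz
  rw [val_pow_sub_self hp hzt ht, WithTop.coe_inj] at h
  rw [hzt, mul_left_cancel₀ (by omega) h]

end Ring

variable {R : Type*} [CommRing R] {v : AddValuation R (WithTop ℤ)} {p : ℕ}

theorem valGE_zero_of_pow_sub_eq (hp : p.Prime) {e s : ℤ} {x y : R} (hpe : ValGE v e (p : R))
    (hs : 0 ≤ s) (hse : (p - 1) * s < e) (hx : ValGE v (-s) x)
    (h : (x + y) ^ p - (x + y) = x ^ p - x) : ValGE v 0 y := by
  by_contra hy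
  obtain ⟨t, ht, hyt⟩ := exists_val_eq_of_not_valGE hy
  have hp2 := hp.two_le
  have hroot : y ^ p - y = p * wittD p x y := by
    rw [add_pow_eq_sub_mul_wittD hp (Commute.all x y)] at h
    linear_combination h
  have hD : ValGE v (p * t - e + 1) (wittD p x y) :=
    hx.wittD (valGE_of_val_eq hyt) (by nlinarith) (by nlinarith)
  have := (hroot ▸ hpe.mul hD).le_of_val_eq (val_pow_sub_self hp.one_lt hyt ht)
  omega

/-- The situation of the paper, seen in the top field and with its valuation `v`: `x₁` and `x₂` are
the components of a root of the Artin–Schreier equation for the Witt vector `(a, μ ^ p * a)`. In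
the notation there, `b = b₁`, `M = p ^ 2 * m` and `e = p ^ 2 * e₀`; the last ramification number
`b₂` is `M + b`. -/
structure IsWittRoot (v : AddValuation R (WithTop ℤ)) (p : ℕ) (b M e : ℤ) (a μ x₁ x₂ : R) :
    Prop where
  prime : p.Prime
  valGE_natCast : ValGE v e (p : R)
  pos : 0 < b
  val_a : v a = (-(p ^ 2 * b) : ℤ)
  val_μ : v μ = (-M : ℤ)
  mul_le : (p ^ 2 - 1) * b ≤ M
  mul_lt : (p - 1) * (M + p * b) < e
  pow_sub₁ : x₁ ^ p - x₁ = a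
  pow_sub₂ : x₂ ^ p - x₂ = μ ^ p * a + wittD p x₁ a

namespace IsWittRoot

variable {b M e : ℤ} {a μ x₁ x₂ : R}

theorem two_le (h : IsWittRoot v p b M e a μ x₁ x₂) : (2 : ℤ) ≤ p := by
  exact_mod_cast h.prime.two_le

theorem mul_pred_mul_pos (h : IsWittRoot v p b M e a μ x₁ x₂) : 0 < p * ((p - 1) * b) := by
  have hp := h.two_le
  exact mul_pos (by omega) (mul_pos (by omega) h.pos)

theorem M_pos (h : IsWittRoot v p b M e a μ x₁ x₂) : 0 < M :=
  (mul_pos (by nlinarith [h.two_le]) h.pos).trans_le h.mul_le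

theorem val_x₁ (h : IsWittRoot v p b M e a μ x₁ x₂) : v x₁ = (-(p * b) : ℤ) := by
  have hb := h.pos
  have hp := h.prime.pos
  refine val_eq_of_pow_sub h.prime.one_lt (neg_lt_zero.2 (by positivity)) ?_
  rw [h.pow_sub₁, h.val_a]
  ring_nf

theorem valGE_wittD (h : IsWittRoot v p b M e a μ x₁ x₂) :
    ValGE v (-(p * (M + b)) + 1) (wittD p x₁ a) := by
  have hp := h.two_le
  have hpb := h.mul_pred_mul_pos
  have hpM := mul_le_mul_of_nonneg_left h.mul_le (by omega : (0 : ℤ) ≤ p)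
  refine (valGE_of_val_eq h.val_x₁).wittD (valGE_of_val_eq h.val_a) ?_ ?_ <;> nlinarith

theorem valGE_x₂ (h : IsWittRoot v p b M e a μ x₁ x₂) : ValGE v (-(M + p * b)) x₂ := by
  have hM := h.M_pos
  have hb := h.pos
  have hpb := h.mul_pred_mul_pos
  refine valGE_of_pow_sub h.prime.one_lt (by nlinarith) ?_
  rw [h.pow_sub₂]
  exact (((valGE_of_val_eq h.val_μ).pow p).mul (valGE_of_val_eq h.val_a) |>.mono (by linarith)).add
    (h.valGE_wittD.mono (by linarith))

theorem val_sub_mul (h : IsWittRoot v p b M e a μ x₁ x₂) : v (x₂ - μ * x₁) = (-(M + b) : ℤ) := by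
  have hpM : 0 < (p - 1) * M := mul_pos (by linarith [h.two_le]) h.M_pos
  have he := h.mul_lt
  set X := x₂ - μ * x₁ with hX
  have hXp : X ^ p = -(μ ^ p * x₁) + (x₂ + wittD p x₁ a + p * wittD p X (μ * x₁)) := by
    have hadd := add_pow_eq_sub_mul_wittD h.prime (Commute.all X (μ * x₁))
    rw [hX, sub_add_cancel, mul_pow, ← hX] at hadd
    linear_combination h.pow_sub₂ - hadd - μ ^ p * h.pow_sub₁
  have hlead : v (-(μ ^ p * x₁)) = (p * -(M + b) : ℤ) := by
    rw [v.map_neg, val_mul_eq (val_pow_eq h.val_μ p) h.val_x₁]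
    ring_nf
  have hmixed : ValGE v (-(p * (M + p * b))) (wittD p X (μ * x₁)) := by
    have hμx₁ : ValGE v (-(M + p * b)) (μ * x₁) :=
      (valGE_of_val_eq (val_mul_eq h.val_μ h.val_x₁)).mono (by linarith)
    exact (h.valGE_x₂.sub hμx₁).wittD hμx₁ (by linarith) (by linarith)
  refine val_eq_of_pow h.prime.ne_zero ?_
  rw [hXp]
  refine val_add_eq hlead (((h.valGE_x₂.mono ?_).add (h.valGE_wittD.mono ?_)).add
    ((h.valGE_natCast.mul hmixed).mono ?_)) <;> linarith

end IsWittRoot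

end ArtinSchreier

section Extension

variable {F K : Type*} [Field F] [Field K] [Algebra F K] {v : AddValuation K (WithTop ℤ)}

open Module (finrank)

/-- `K` is totally ramified over `F` with respect to `v`: the valuations of the nonzero elements
of `F` are divisible by the degree. -/
def IsTotallyRamified (F : Type*) {K : Type*} [Field F] [Field K] [Algebra F K]
    (v : AddValuation K (WithTop ℤ)) : Prop :=
  ∀ a : F, a ≠ 0 → ∃ k : ℤ, v (algebraMap F K a) = (finrank F K * k : ℤ)

namespace IsTotallyRamified

variable {X : K} {t : ℤ}

theorem eq_or_val_eq_top (hF : IsTotallyRamified F v) (hX : v X = t)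
    (ht : IsCoprime (finrank F K : ℤ) t) (c : Fin (finrank F K) → F) {i j : Fin (finrank F K)}
    (h : v (c i • X ^ (i : ℕ)) = v (c j • X ^ (j : ℕ))) :
    i = j ∨ v (c i • X ^ (i : ℕ)) = ⊤ := by
  by_cases hi : c i = 0
  · simp [hi]
  by_cases hj : c j = 0
  · right
    rw [h]
    simp [hj]
  obtain ⟨k, hk⟩ := hF _ hi
  obtain ⟨l, hl⟩ := hF _ hj
  rw [Algebra.smul_def, Algebra.smul_def, val_mul_eq hk (val_pow_eq hX i),
    val_mul_eq hl (val_pow_eq hX j), WithTop.coe_inj] at h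
  have hdvd : (finrank F K : ℤ) ∣ (i : ℕ) - (j : ℕ) :=
    ht.dvd_of_dvd_mul_right ⟨l - k, by linear_combination h⟩
  have := Int.eq_zero_of_abs_lt_dvd hdvd (by rw [abs_lt]; omega)
  exact .inl (Fin.ext (by omega))

theorem val_sum_smul_pow_le (hF : IsTotallyRamified F v) (hX : v X = t)
    (ht : IsCoprime (finrank F K : ℤ) t) (c : Fin (finrank F K) → F) (i : Fin (finrank F K)) :
    v (∑ i, c i • X ^ (i : ℕ)) ≤ v (c i • X ^ (i : ℕ)) :=
  val_sum_le_of_injOn v (fun _ _ _ _ => hF.eq_or_val_eq_top hX ht c) (Finset.mem_univ i)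

theorem linearIndependent_pow (hF : IsTotallyRamified F v) (hX : v X = t)
    (ht : IsCoprime (finrank F K : ℤ) t) :
    LinearIndependent F fun i : Fin (finrank F K) => X ^ (i : ℕ) := by
  refine Fintype.linearIndependent_iff.2 fun c hc i => by_contra fun hi => ?_
  obtain ⟨k, hk⟩ := hF _ hi
  have hle := hF.val_sum_smul_pow_le hX ht c i
  rw [hc, v.map_zero, top_le_iff, Algebra.smul_def, val_mul_eq hk (val_pow_eq hX i)] at hle
  exact WithTop.coe_ne_top hle

theorem exists_eq_sum_smul_pow [FiniteDimensional F K] (hF : IsTotallyRamified F v) (hX : v X = t)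
    (ht : IsCoprime (finrank F K : ℤ) t) (x : K) :
    ∃ c : Fin (finrank F K) → F, x = ∑ i, c i • X ^ (i : ℕ) := by
  have : Nonempty (Fin (finrank F K)) := ⟨⟨0, Module.finrank_pos⟩⟩
  let B := basisOfLinearIndependentOfCardEqFinrank (hF.linearIndependent_pow hX ht)
    (Fintype.card_fin _)
  exact ⟨B.repr x, by simpa [B] using (B.sum_repr x).symm⟩

end IsTotallyRamified

/-- The operator `A` raises valuations by at least `c`. -/
def Raises (v : AddValuation K (WithTop ℤ)) (c : ℤ) (A : Module.End F K) : Prop :=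
  ∀ n x, ValGE v n x → ValGE v (n + c) (A x)

namespace Raises

variable {A B : Module.End F K} {a b c : ℤ} {p : ℕ}

theorem mono (h : Raises v a A) (hba : b ≤ a) : Raises v b A :=
  fun n x hx => (h n x hx).mono (by omega)

theorem zero (c : ℤ) : Raises v c (0 : Module.End F K) := fun n _ _ => ValGE.zero (n + c)

theorem one : Raises v 0 (1 : Module.End F K) := fun n x hx => by simpa using hx

theorem add (hA : Raises v c A) (hB : Raises v c B) : Raises v c (A + B) :=
  fun n x hx => (hA n x hx).add (hB n x hx)

theorem neg (hA : Raises v c A) : Raises v c (-A) := fun n x hx => (hA n x hx).neg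

theorem sub (hA : Raises v c A) (hB : Raises v c B) : Raises v c (A - B) :=
  fun n x hx => (hA n x hx).sub (hB n x hx)

theorem mul (hA : Raises v a A) (hB : Raises v b B) : Raises v (a + b) (A * B) :=
  fun n x hx => (hA _ _ (hB n x hx)).mono (by omega)

theorem pow (hA : Raises v a A) (k : ℕ) : Raises v (k * a) (A ^ k) := by
  induction k with
  | zero => simpa using one
  | succ k ih => rw [pow_succ]; exact (ih.mul hA).mono (by push_cast; linarith)

theorem smul {s : F} (hs : ValGE v b (algebraMap F K s)) (hA : Raises v a A) :
    Raises v (b + a) (s • A) := fun n x hx => by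
  rw [LinearMap.smul_apply, Algebra.smul_def]
  exact (hs.mul (hA n x hx)).mono (by omega)

theorem natCast {k : ℕ} (hk : ValGE v c (k : K)) : Raises v c (k : Module.End F K) :=
  fun n x hx => by
    rw [Module.End.natCast_apply, nsmul_eq_mul]
    exact (hk.mul hx).mono (by omega)

theorem sum {ι : Type*} {s : Finset ι} {f : ι → Module.End F K}
    (h : ∀ i ∈ s, Raises v c (f i)) : Raises v c (∑ i ∈ s, f i) :=
  Finset.sum_induction f (Raises v c) (fun _ _ => add) (zero c) h

theorem wittD_one (ha : 0 ≤ a) (hA : Raises v a A) : Raises v a (wittD p 1 A) := by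
  refine (sum fun k hk => ?_).neg
  obtain ⟨-, hkp⟩ := Finset.mem_Ioo.1 hk
  rw [one_pow, one_mul]
  exact ((hA.pow (p - k)).mul (natCast (ValGE.natCast _))).mono
    (by nlinarith [show (1 : ℤ) ≤ (p - k : ℕ) by omega])

theorem natCast_mul_wittD_one {e : ℤ} (hpe : ValGE v e (p : K)) (ha : 0 ≤ a) (hA : Raises v a A) :
    Raises v (e + a) ((p : Module.End F K) * wittD p 1 A) :=
  (natCast hpe).mul (hA.wittD_one ha)

end Raises

theorem one_add_pow_eq_sub_mul_wittD {R : Type*} [Ring R] {p : ℕ} (hp : p.Prime) (A : R) :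
    (1 + A) ^ p = 1 + A ^ p - p * wittD p 1 A := by
  rw [add_pow_eq_sub_mul_wittD hp (Commute.one_left A), one_pow]

theorem IsTotallyRamified.raises_sub_one [FiniteDimensional F K] (hF : IsTotallyRamified F v)
    {X : K} {t c : ℤ} (hX : v X = t) (ht : IsCoprime (finrank F K : ℤ) t) (hc : 0 ≤ c)
    {σ : K ≃ₐ[F] K} (hσ : ValGE v (t + c) (σ X - X)) :
    Raises v c ((σ.toLinearMap : Module.End F K) - 1) := by
  have hXge := valGE_of_val_eq hX
  have hσX : ValGE v t (σ X) := by simpa using (hσ.mono (by omega)).add hXge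
  intro n x hx
  obtain ⟨a, rfl⟩ := hF.exists_eq_sum_smul_pow hX ht x
  rw [map_sum]
  refine ValGE.sum fun i _ => ?_
  have hterm : ValGE v n (a i • X ^ (i : ℕ)) := hx.trans (hF.val_sum_smul_pow_le hX ht a i)
  by_cases hi : a i = 0
  · simpa [hi] using ValGE.zero _
  obtain ⟨k, hk⟩ := hF _ hi
  rw [Algebra.smul_def] at hterm
  have hle := hterm.le_of_val_eq (val_mul_eq hk (val_pow_eq hX i))
  have hpow := hσX.pow_sub_pow hXge hσ i
  rw [map_smul, Algebra.smul_def, LinearMap.sub_apply, Module.End.one_apply,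
    AlgEquiv.toLinearMap_apply, map_pow]
  exact ((valGE_of_val_eq hk).mul hpow).mono (by linarith)

theorem pow_apply_eq_self_of_finrank_adjoin_dvd [IsGalois F K]
    [IsMulCommutative (K ≃ₐ[F] K)] {x : K} {k : ℕ}
    (hk : finrank F (IntermediateField.adjoin F {x}) ∣ k) (σ : K ≃ₐ[F] K) : (σ ^ k) x = x := by
  rw [IntermediateField.finrank_eq_fixingSubgroup_index] at hk
  obtain ⟨l, rfl⟩ := hk
  have hmem := Subgroup.pow_mem _ (Subgroup.pow_index_mem
    (IntermediateField.adjoin F {x}).fixingSubgroup σ) l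
  rw [← pow_mul] at hmem
  exact (IntermediateField.mem_fixingSubgroup_iff _ _).1 hmem x
    (IntermediateField.mem_adjoin_simple_self F x)

open Polynomial in
theorem natDegree_minpoly_le_of_pow_sub {p : ℕ} (hp : 1 < p) {x : K} {a : F}
    (hx : x ^ p - x = algebraMap F K a) : (minpoly F x).natDegree ≤ p := by
  have hdeg : (X + C a : F[X]).degree < p := by
    rw [degree_X_add_C]
    exact_mod_cast hp
  have hmonic : (X ^ p - (X + C a) : F[X]).Monic := monic_X_pow_sub hdeg
  have hdvd := minpoly.dvd F x (p := X ^ p - (X + C a)) (by simp [← hx])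
  have hle : (X ^ p - (X + C a) : F[X]).natDegree ≤ max p p :=
    natDegree_sub_le_of_le (natDegree_X_pow p).le ((natDegree_X_add_C a).trans_le hp.le)
  exact (natDegree_le_of_dvd hdvd hmonic.ne_zero).trans (hle.trans_eq (max_self p))

theorem finrank_adjoin_dvd_of_pow_sub {p n : ℕ} (hp : p.Prime) [FiniteDimensional F K]
    (hdeg : finrank F K = p ^ n) {x : K} {a : F} (hx : x ^ p - x = algebraMap F K a) :
    finrank F (IntermediateField.adjoin F {x}) ∣ p := by
  have hle := natDegree_minpoly_le_of_pow_sub hp.one_lt hx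
  rw [← IntermediateField.adjoin.finrank (Algebra.IsIntegral.isIntegral x)] at hle
  obtain ⟨k, -, hk⟩ := (Nat.dvd_prime_pow hp).1
    (hdeg ▸ Dvd.intro _ (Module.finrank_mul_finrank F (IntermediateField.adjoin F {x}) K))
  rw [hk] at hle ⊢
  have hk1 : k ≤ 1 := (Nat.pow_le_pow_iff_right hp.one_lt).1 (hle.trans_eq (pow_one p).symm)
  exact (pow_dvd_pow p hk1).trans (pow_one p).dvd

theorem pow_apply_eq_self_of_pow_sub {p : ℕ} (hp : p.Prime) [FiniteDimensional F K] [IsGalois F K]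
    (hdeg : finrank F K = p ^ 2) {x : K} {a : F} (hx : x ^ p - x = algebraMap F K a)
    (σ : K ≃ₐ[F] K) : (σ ^ p) x = x := by
  have : Fact p.Prime := ⟨hp⟩
  have := IsPGroup.isMulCommutative_of_card_eq_prime_sq
    ((IsGalois.card_aut_eq_finrank F K).trans hdeg)
  exact pow_apply_eq_self_of_finrank_adjoin_dvd (finrank_adjoin_dvd_of_pow_sub hp hdeg hx) σ

theorem toLinearMap_pow_pow_eq_one {p : ℕ} [FiniteDimensional F K] [IsGalois F K]
    (hdeg : finrank F K = p ^ 2) (σ : K ≃ₐ[F] K) :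
    ((σ.toLinearMap : Module.End F K) ^ p) ^ p = 1 := by
  have hσ : σ ^ p ^ 2 = 1 := by
    rw [← hdeg, ← IsGalois.card_aut_eq_finrank F K, pow_card_eq_one']
  rw [← pow_mul, ← sq, ← AlgEquiv.pow_toLinearMap, hσ]
  rfl

end Extension

section Automorphisms

open Module (finrank)

variable {F K : Type*} [Field F] [Field K] [Algebra F K]
  {v : AddValuation K (WithTop ℤ)} {p : ℕ} {b M e : ℤ} {a μ : F} {x₁ x₂ : K}

namespace IsWittRoot

theorem isCoprime_finrank
    (h : IsWittRoot v p b M e (algebraMap F K a) (algebraMap F K μ) x₁ x₂)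
    (hF : IsTotallyRamified F v) (hdeg : finrank F K = p ^ 2) (hpb : ¬ (p : ℤ) ∣ b) :
    IsCoprime (finrank F K : ℤ) (-(M + b)) := by
  have hμ : μ ≠ 0 := by
    rintro rfl
    exact WithTop.top_ne_coe (v.map_zero.symm.trans (map_zero (algebraMap F K) ▸ h.val_μ))
  obtain ⟨k, hk⟩ := hF μ hμ
  rw [h.val_μ, WithTop.coe_inj, hdeg] at hk
  have hpM : (p : ℤ) ∣ M := ⟨-(p * k), by push_cast at hk; linear_combination -hk⟩
  rw [hdeg, Nat.cast_pow]
  refine ((Nat.prime_iff_prime_int.1 h.prime).coprime_iff_not_dvd.2 fun hdvd => hpb ?_).pow_left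
  exact (Int.dvd_add_right hpM).1 (Int.dvd_neg.1 hdvd)

theorem raises_pow_sub_one [FiniteDimensional F K] [IsGalois F K]
    (h : IsWittRoot v p b M e (algebraMap F K a) (algebraMap F K μ) x₁ x₂)
    (hF : IsTotallyRamified F v) (hdeg : finrank F K = p ^ 2) (hpb : ¬ (p : ℤ) ∣ b)
    (σ : K ≃ₐ[F] K) :
    Raises v (M + b) (((σ ^ p).toLinearMap : Module.End F K) - 1) := by
  have hM := h.M_pos
  have hb := h.pos
  have hσx₁ : (σ ^ p) x₁ = x₁ := pow_apply_eq_self_of_pow_sub h.prime hdeg h.pow_sub₁ σ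
  have hσx₂ : ValGE v 0 ((σ ^ p) x₂ - x₂) := by
    refine valGE_zero_of_pow_sub_eq h.prime h.valGE_natCast (s := M + p * b) (by positivity)
      h.mul_lt h.valGE_x₂ ?_
    rw [add_sub_cancel, ← map_pow, ← map_sub, h.pow_sub₂]
    simp only [map_add, map_mul, map_pow, map_wittD, AlgEquiv.commutes, hσx₁]
  refine hF.raises_sub_one h.val_sub_mul (h.isCoprime_finrank hF hdeg hpb) (by omega) ?_
  rwa [map_sub, map_mul, AlgEquiv.commutes, hσx₁, sub_sub_sub_cancel_right, neg_add_cancel]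

theorem raises_sub_one [FiniteDimensional F K]
    (h : IsWittRoot v p b M e (algebraMap F K a) (algebraMap F K μ) x₁ x₂)
    (hF : IsTotallyRamified F v) (hdeg : finrank F K = p ^ 2) (hpb : ¬ (p : ℤ) ∣ b)
    {σ : K ≃ₐ[F] K} {ε δ : K} (hσ₁ : σ x₁ = x₁ + 1 + ε) (hε : ValGE v 0 ε)
    (hσ₂ : σ x₂ = x₂ + wittD p x₁ 1 + δ) (hδ : ValGE v 0 δ) :
    Raises v b ((σ.toLinearMap : Module.End F K) - 1) := by
  have hM := h.M_pos
  have hb := h.pos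
  have hp := h.two_le
  have hMb := h.mul_le
  refine hF.raises_sub_one h.val_sub_mul (h.isCoprime_finrank hF hdeg hpb) hb.le ?_
  have hσX : σ (x₂ - algebraMap F K μ * x₁) - (x₂ - algebraMap F K μ * x₁) =
      wittD p x₁ 1 + δ - algebraMap F K μ * (1 + ε) := by
    rw [map_sub, map_mul, AlgEquiv.commutes, hσ₁, hσ₂]
    ring
  rw [hσX]
  refine (((valGE_of_val_eq h.val_x₁).wittD ValGE.one ?_ ?_).add (hδ.mono ?_)).sub
    (((valGE_of_val_eq h.val_μ).mul (ValGE.one.add hε)).mono ?_) <;> nlinarith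

end IsWittRoot

end Automorphisms

section TruncatedPower

variable {F K : Type*} [Field F] [Field K] [Algebra F K] {v : AddValuation K (WithTop ℤ)}

/-- The generalized binomial coefficient `μ (μ - 1) ⋯ (μ - i + 1) / i!`. -/
def genBinom (μ : F) (i : ℕ) : F := (∏ k ∈ Finset.range i, (μ - (k : F))) / (i.factorial : F)

/-- The truncated exponentiation `(1 + N) ^ [μ]`: the binomial series for the `μ`-th power of
`1 + N`, cut off before the term of degree `p`. -/
def truncPow {A : Type*} [Ring A] [Algebra F A] (p : ℕ) (μ : F) (N : A) : A :=
  ∑ i ∈ Finset.range p, genBinom μ i • N ^ i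

theorem valGE_prod_range_sub {μ : K} {M : ℤ} (hM : 0 ≤ M) (hμ : ValGE v (-M) μ) (i : ℕ) :
    ValGE v (i * -M) (∏ k ∈ Finset.range i, (μ - (k : K))) := by
  induction i with
  | zero => simpa using ValGE.one
  | succ i ih =>
    rw [Finset.prod_range_succ]
    exact (ih.mul (hμ.sub ((ValGE.natCast i).mono (by omega)))).mono (by push_cast; linarith)

theorem valGE_genBinom {p : ℕ} (hp : p.Prime) (hpv : ValGE v 1 (p : K)) {μ : F} {M : ℤ}
    (hM : 0 ≤ M) (hμ : ValGE v (-M) (algebraMap F K μ)) {i : ℕ} (hi : i < p) :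
    ValGE v (i * -M) (algebraMap F K (genBinom μ i)) := by
  have hfac : v (i.factorial : K) = 0 :=
    val_natCast_eq_zero_of_coprime hpv (hp.coprime_factorial_of_lt hi).symm
  rw [genBinom, map_div₀, map_prod, map_natCast]
  simp only [map_sub, map_natCast]
  rw [ValGE, v.map_div, hfac, sub_zero]
  exact valGE_prod_range_sub hM hμ i

theorem exists_truncPow_eq {p : ℕ} (hp : p.Prime) (hpv : ValGE v 1 (p : K)) {μ : F} {b M : ℤ}
    (hb : 0 ≤ b) (hM : 0 ≤ M) (hμ : ValGE v (-M) (algebraMap F K μ)) {N : Module.End F K}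
    (hN : Raises v (M + b) N) :
    ∃ W, truncPow p μ N = 1 + N * W ∧ Raises v (-M) W ∧ ∀ S, Commute S N → Commute S W := by
  obtain ⟨q, rfl⟩ := Nat.exists_eq_succ_of_ne_zero hp.ne_zero
  refine ⟨∑ i ∈ Finset.range q, genBinom μ (i + 1) • N ^ i, ?_, Raises.sum fun i hi => ?_, ?_⟩
  · rw [truncPow, Finset.sum_range_succ', Finset.mul_sum, add_comm]
    simp only [mul_smul_comm, pow_succ']
    simp [genBinom]
  · have hi : i + 1 < q + 1 := Nat.succ_lt_succ (Finset.mem_range.1 hi)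
    refine (Raises.smul (valGE_genBinom hp hpv hM hμ hi) (hN.pow i)).mono ?_
    push_cast
    nlinarith
  · exact fun S hS => Commute.sum_right _ _ _ fun i _ => (hS.pow_right i).smul_right _

end TruncatedPower

section ScaffoldOperators

variable {F K : Type*} [Field F] [Field K] [Algebra F K] {v : AddValuation K (WithTop ℤ)}
  {p : ℕ} {b M e : ℤ} {S N P W : Module.End F K}

/-- What the scaffold operators `Ψ₁ = P` and `Ψ₂ = N` of an extension with ramification numbers
`b₁` and `b₂` do to valuations, where `e` is the valuation of `p`. -/
structure IsScaffoldPair (v : AddValuation K (WithTop ℤ)) (p : ℕ) (b₁ b₂ e : ℤ)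
    (P N : Module.End F K) : Prop where
  commute : Commute N P
  raises_P : Raises v b₁ P
  raises_N : Raises v b₂ N
  raises_N_pow : Raises v (e + b₂) (N ^ p)
  raises_P_pow_sub : Raises v (e + b₁ - (p - 1) * (b₂ - b₁)) (P ^ p - N)

theorem raises_pow_of_one_add_pow_eq_one (hp : p.Prime) (hpe : ValGE v e (p : K)) (hb : 0 ≤ b)
    (hN : Raises v b N) (h : (1 + N) ^ p = 1) : Raises v (e + b) (N ^ p) := by
  rw [one_add_pow_eq_sub_mul_wittD hp, add_sub_assoc, add_eq_left, sub_eq_zero] at h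
  rw [h]
  exact Raises.natCast_mul_wittD_one hpe hb hN

theorem raises_mul_one_add_sub_one (hb : 0 ≤ b) (hS : Raises v b (S - 1)) (hN : Raises v b N) :
    Raises v b (S * (1 + N) - 1) := by
  have hS₀ : Raises v 0 S := by simpa using (hS.mono hb).add Raises.one
  rw [show S * (1 + N) - 1 = (S - 1) + S * N by noncomm_ring]
  exact hS.add ((hS₀.mul hN).mono (zero_add b).ge)

theorem pow_sub_eq_of_one_add_eq (hp : p.Prime) (hSN : S ^ p = 1 + N) (hSW : Commute S (N * W))
    (hP : 1 + P = S * (1 + N * W)) :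
    P ^ p - N = (1 + N) * ((N * W) ^ p - p * wittD p 1 (N * W)) + p * wittD p 1 P := by
  have hpow : (1 + P) ^ p = (1 + N) * (1 + N * W) ^ p := by
    rw [hP, ((Commute.one_right S).add_right hSW).mul_pow, hSN]
  rw [one_add_pow_eq_sub_mul_wittD hp, one_add_pow_eq_sub_mul_wittD hp] at hpow
  calc P ^ p - N = (1 + P ^ p - p * wittD p 1 P) - (1 + N) + p * wittD p 1 P := by abel
    _ = (1 + N) * ((N * W) ^ p - p * wittD p 1 (N * W)) + p * wittD p 1 P := by
      rw [hpow, add_sub_assoc, mul_add, mul_one]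
      abel

theorem isScaffoldPair_of_one_add_eq (hp : p.Prime) (hpe : ValGE v e (p : K)) (hb : 0 ≤ b)
    (hM : 0 ≤ M) (hSN : S ^ p = 1 + N) (hS : (S ^ p) ^ p = 1) (hSr : Raises v b (S - 1))
    (hNr : Raises v (M + b) N) (hWr : Raises v (-M) W) (hW : ∀ T, Commute T N → Commute T W) :
    IsScaffoldPair v p b (M + b) e (S * (1 + N * W) - 1) N := by
  have hSN' : Commute S N := by
    rw [eq_sub_of_add_eq' hSN.symm]
    exact ((Commute.refl S).pow_right p).sub_right (Commute.one_right S)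
  have hNW : Commute N W := hW N (Commute.refl N)
  have hNWr : Raises v b (N * W) := (hNr.mul hWr).mono (by linarith)
  have hPr := raises_mul_one_add_sub_one hb hSr hNWr
  have hNp : Raises v (e + (M + b)) (N ^ p) :=
    raises_pow_of_one_add_pow_eq_one hp hpe (by omega) hNr (hSN ▸ hS)
  refine ⟨(hSN'.symm.mul_right ((Commute.one_right N).add_right
    ((Commute.refl N).mul_right hNW))).sub_right (Commute.one_right N), hPr, hNr, hNp, ?_⟩
  have hp1 : 0 ≤ (p - 1) * M := mul_nonneg (by have := hp.one_le; omega) hM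
  have hNWp : Raises v (e + b - (p - 1) * (M + b - b)) ((N * W) ^ p) := by
    rw [hNW.mul_pow]
    exact (hNp.mul (hWr.pow p)).mono (by linarith)
  have hmixed {A : Module.End F K} (hA : Raises v b A) :
      Raises v (e + b - (p - 1) * (M + b - b)) ((p : Module.End F K) * wittD p 1 A) :=
    (Raises.natCast_mul_wittD_one hpe hb hA).mono (by linarith)
  rw [pow_sub_eq_of_one_add_eq hp hSN (hSN'.mul_right (hW S hSN')) (add_sub_cancel _ _)]
  have h1N : Raises v 0 (1 + N) := Raises.one.add (hNr.mono (by omega))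
  exact ((h1N.mul (hNWp.sub (hmixed hNWr))).mono (zero_add _).ge).add (hmixed hPr)

theorem IsWittRoot.isScaffoldPair [FiniteDimensional F K] [IsGalois F K] {a μ : F} {x₁ x₂ : K}
    (h : IsWittRoot v p b M e (algebraMap F K a) (algebraMap F K μ) x₁ x₂)
    (hF : IsTotallyRamified F v) (hdeg : Module.finrank F K = p ^ 2) (hpb : ¬ (p : ℤ) ∣ b)
    {σ : K ≃ₐ[F] K} {ε δ : K} (hσ₁ : σ x₁ = x₁ + 1 + ε) (hε : ValGE v 0 ε)
    (hσ₂ : σ x₂ = x₂ + wittD p x₁ 1 + δ) (hδ : ValGE v 0 δ) :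
    IsScaffoldPair v p b (M + b) e
      (σ.toLinearMap * truncPow p μ ((σ ^ p).toLinearMap - 1 : Module.End F K) - 1)
      ((σ ^ p).toLinearMap - 1) := by
  have he : 0 < e := h.mul_lt.trans_le' <|
    mul_nonneg (by linarith [h.two_le]) (add_nonneg h.M_pos.le (mul_nonneg (by simp) h.pos.le))
  have hN := h.raises_pow_sub_one hF hdeg hpb σ
  obtain ⟨W, hNW, hWr, hW⟩ := exists_truncPow_eq h.prime (h.valGE_natCast.mono he) h.pos.le
    h.M_pos.le (valGE_of_val_eq h.val_μ) hN
  rw [hNW]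
  exact isScaffoldPair_of_one_add_eq h.prime h.valGE_natCast h.pos.le h.M_pos.le
    (by rw [AlgEquiv.pow_toLinearMap, add_sub_cancel]) (toLinearMap_pow_pow_eq_one hdeg σ)
    (h.raises_sub_one hF hdeg hpb hσ₁ hε hσ₂ hδ) hN hWr hW

end ScaffoldOperators

section Digits

/-- The operator `Ψ^{(a)}` of the paper for `P = Ψ₁` and `N = Ψ₂`. -/
def digitPow {A : Type*} [MonoidWithZero A] (p : ℕ) (N P : A) (a : ℕ) : A :=
  if a < p ^ 2 then N ^ (a / p) * P ^ (a % p) else 0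

/-- The number `𝔟(a)` of the paper, for `a < p ^ 2`. -/
def digitWeight (p : ℕ) (b₁ b₂ : ℤ) (a : ℕ) : ℤ :=
  (1 + ((a / p : ℕ) : ℤ)) * b₂ + ((a % p : ℕ) : ℤ) * (p : ℤ) * b₁

section MonoidWithZero

variable {A : Type*} [MonoidWithZero A] {p j r k u : ℕ} {N P : A}

theorem digitPow_of_lt (hj : j < p ^ 2) : digitPow p N P j = N ^ (j / p) * P ^ (j % p) :=
  if_pos hj

theorem digitPow_mul_add (hu : u < p) :
    digitPow p N P (p * k + u) = if k < p then N ^ k * P ^ u else 0 := by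
  have hlt : p * k + u < p ^ 2 ↔ k < p := by
    rw [sq, ← Nat.div_lt_iff_lt_mul (by omega), Nat.mul_add_div (by omega), Nat.div_eq_of_lt hu,
      add_zero]
  simp only [digitPow, hlt, Nat.mul_add_div (by omega : 0 < p), Nat.mul_add_mod,
    Nat.div_eq_of_lt hu, Nat.mod_eq_of_lt hu, add_zero]

theorem digitPow_mul_digitPow (h : Commute N P) (hj : j < p ^ 2) (hr : r < p ^ 2) :
    digitPow p N P j * digitPow p N P r = N ^ (j / p + r / p) * P ^ (j % p + r % p) := by
  rw [digitPow_of_lt hj, digitPow_of_lt hr, pow_add, pow_add]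
  exact (h.pow_pow (r / p) (j % p)).symm.mul_mul_mul_comm _ _

theorem add_eq_mul_div_add_mod (p j r : ℕ) : j + r = p * (j / p + r / p) + (j % p + r % p) := by
  linarith [Nat.div_add_mod j p, Nat.div_add_mod r p]

theorem digitPow_mul_digitPow_of_no_carry (h : Commute N P) (hj : j < p ^ 2) (hr : r < p ^ 2)
    (h₀ : j % p + r % p < p) (h₁ : j / p + r / p < p) :
    digitPow p N P j * digitPow p N P r = digitPow p N P (j + r) := by
  rw [digitPow_mul_digitPow h hj hr, add_eq_mul_div_add_mod p j r, digitPow_mul_add h₀, if_pos h₁]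

end MonoidWithZero

namespace IsScaffoldPair

variable {F K : Type*} [Field F] [Field K] [Algebra F K] {v : AddValuation K (WithTop ℤ)}
  {p : ℕ} {b₁ b₂ e : ℤ} {P N : Module.End F K}

theorem raises_pow_mul_pow_sub_of_lt (h : IsScaffoldPair v p b₁ b₂ e P N) {k u : ℕ} (hu : u < p) :
    Raises v (e + (k - p + 1) * b₂ + u * b₁) (N ^ k * P ^ u - digitPow p N P (p * k + u)) := by
  rw [digitPow_mul_add hu]
  split_ifs with hk
  · rw [sub_self]
    exact Raises.zero _
  · obtain ⟨l, rfl⟩ := Nat.exists_eq_add_of_le (not_lt.1 hk)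
    rw [sub_zero, pow_add]
    refine ((h.raises_N_pow.mul (h.raises_N.pow l)).mul (h.raises_P.pow u)).mono ?_
    push_cast
    linarith

theorem raises_pow_mul_pow_sub (h : IsScaffoldPair v p b₁ b₂ e P N) (hb : p * b₁ ≤ b₂) {k u : ℕ}
    (hu : u < 2 * p) :
    Raises v (e + (k - p + 1) * b₂ + u * b₁) (N ^ k * P ^ u - digitPow p N P (p * k + u)) := by
  rcases lt_or_ge u p with hup | hpu
  · exact h.raises_pow_mul_pow_sub_of_lt hup
  obtain ⟨t, rfl⟩ := Nat.exists_eq_add_of_le hpu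
  have hsplit : N ^ k * P ^ (p + t) - digitPow p N P (p * k + (p + t)) =
      N ^ k * ((P ^ p - N) * P ^ t) +
        (N ^ (k + 1) * P ^ t - digitPow p N P (p * (k + 1) + t)) := by
    rw [pow_add P, sub_mul, mul_sub, pow_succ, mul_assoc (N ^ k), mul_add_one, add_assoc]
    abel
  rw [hsplit]
  refine Raises.add
    (((h.raises_N.pow k).mul (h.raises_P_pow_sub.mul (h.raises_P.pow t))).mono ?_)
    ((h.raises_pow_mul_pow_sub_of_lt (by omega)).mono ?_)
  · push_cast
    linarith
  · push_cast
    linarith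

theorem raises_digitPow_mul_sub (h : IsScaffoldPair v p b₁ b₂ e P N) (hb₁ : 0 ≤ b₁)
    (hb : p ^ 2 * b₁ ≤ b₂) {j r : ℕ} (hj : j < p ^ 2) (hr : r < p ^ 2) :
    Raises v (e - p * b₂ - (p ^ 2 - p + 1) * b₁ + digitWeight p b₁ b₂ j + digitWeight p b₁ b₂ r
        - 2 * b₂ + b₁)
      (digitPow p N P j * digitPow p N P r - digitPow p N P (j + r)) := by
  have hp : 0 < p := Nat.pos_of_ne_zero (by rintro rfl; simp at hj)
  have hj₀ := Nat.mod_lt j hp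
  have hr₀ := Nat.mod_lt r hp
  have hb₁p : b₁ ≤ p * b₁ := le_mul_of_one_le_left hb₁ (by omega)
  have hpb : p * b₁ ≤ b₂ := hb.trans' <| by
    rw [sq, mul_assoc]
    exact mul_le_mul_of_nonneg_left hb₁p (by omega)
  rw [digitPow_mul_digitPow h.commute hj hr, add_eq_mul_div_add_mod p j r]
  refine (h.raises_pow_mul_pow_sub hpb (by omega)).mono ?_
  have hs : ((j % p : ℕ) + (r % p : ℕ) : ℤ) * ((p - 1) * b₁) ≤ (2 * p - 2) * ((p - 1) * b₁) :=
    mul_le_mul_of_nonneg_right (by omega) (mul_nonneg (by omega) hb₁)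
  simp only [digitWeight, Nat.cast_add]
  linarith

end IsScaffoldPair

theorem algebraMap_zpow_mul_apply_sub {F K : Type*} [Field F] [Field K] [Algebra F K] {π : F}
    (hπ : π ≠ 0) (A B C : Module.End F K) (x : K) (k l w : ℤ) :
    algebraMap F K (π ^ (-w)) * A (algebraMap F K (π ^ (-k)) * B x) -
        algebraMap F K (π ^ (l - k - w)) * (algebraMap F K (π ^ (-l)) * C x) =
      algebraMap F K (π ^ (-w - k)) * (A * B - C) x := by
  have hleft : π ^ (-w - k) = π ^ (-w) * π ^ (-k) := by
    rw [← zpow_add₀ hπ, sub_eq_add_neg]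
  have hright : π ^ (-w - k) = π ^ (l - k - w) * π ^ (-l) := by
    rw [← zpow_add₀ hπ]
    ring_nf
  simp only [← Algebra.smul_def, map_smul, smul_smul, ← hleft, ← hright]
  rw [← smul_sub, LinearMap.sub_apply, Module.End.mul_apply]

theorem IsScaffoldPair.valGE_zpow_mul_digitPow_sub {F K : Type*} [Field F] [Field K] [Algebra F K]
    {v : AddValuation K (WithTop ℤ)} {p : ℕ} {b₁ b₂ e : ℤ} {P N : Module.End F K}
    (h : IsScaffoldPair v p b₁ b₂ e P N) (hb₁ : 0 ≤ b₁) (hdvd : (p : ℤ) ^ 2 ∣ b₂ - b₁)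
    (hb : p ^ 2 * b₁ ≤ b₂) {π : F} (hπ : v (algebraMap F K π) = (p ^ 2 : ℤ)) {d : ℕ → ℤ}
    (hd : ∀ a < p ^ 2, d a = (digitWeight p b₁ b₂ a).fdiv (p ^ 2)) {ρ₀ : K}
    (hρ₀ : ValGE v (b₂ % (p : ℤ) ^ 2) ρ₀) {j r : ℕ} (hj : j < p ^ 2) (hr : r < p ^ 2) {w : ℤ}
    (hw : w ≤ d j - d 0) :
    ValGE v (e - p * b₂ - (p ^ 2 - p + 1) * b₁) (algebraMap F K (π ^ (-w - d r)) *
      (digitPow p N P j * digitPow p N P r - digitPow p N P (j + r))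
        (algebraMap F K (π ^ d 0) * ρ₀)) := by
  have hp2 : (0 : ℤ) ≤ p ^ 2 := by positivity
  have hπk (k : ℤ) := valGE_of_val_eq <| (map_zpow₀ (algebraMap F K) π k) ▸ val_zpow_eq hπ k
  have hdle : ∀ a < p ^ 2, p ^ 2 * d a ≤ digitWeight p b₁ b₂ a := fun a ha => by
    rw [hd a ha, Int.fdiv_eq_ediv_of_nonneg _ hp2]
    exact Int.mul_ediv_self_le (by rintro h0; simp_all)
  have hd0 : p ^ 2 * d 0 + b₂ % p ^ 2 = b₂ := by
    rw [hd 0 ((Nat.zero_le j).trans_lt hj), Int.fdiv_eq_ediv_of_nonneg _ hp2]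
    simpa [digitWeight] using Int.mul_ediv_add_emod b₂ (p ^ 2)
  have hmod : b₂ % p ^ 2 ≤ b₁ := by
    rw [(Int.modEq_of_dvd hdvd).symm]
    linarith [Int.mul_ediv_add_emod b₁ (p ^ 2), mul_nonneg hp2 (Int.ediv_nonneg hb₁ hp2)]
  have hρ : ValGE v b₂ (algebraMap F K (π ^ d 0) * ρ₀) := ((hπk _).mul hρ₀).mono (by linarith)
  refine ((hπk _).mul (h.raises_digitPow_mul_sub hb₁ hb hj hr _ _ hρ)).mono ?_
  linarith [mul_le_mul_of_nonneg_left hw hp2, hdle j hj, hdle r hr]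

end Digits

theorem statement17_general
    (p : ℕ) (hp : p.Prime)
    (K0 K2 : Type*) [Field K0] [Field K2] [CharZero K2]
    [Algebra K0 K2] [IsGalois K0 K2] [FiniteDimensional K0 K2]
    (hdeg : Module.finrank K0 K2 = p ^ 2)
    (v0 : K0 → ℤ) (v2 : K2 → ℤ) (hv2 : IsDiscVal v2)
    (e0 : ℤ) (he0 : e0 = v0 (p : K0))
    (hram : ∀ x : K0, x ≠ 0 → v2 (algebraMap K0 K2 x) = (p : ℤ) ^ 2 * v0 x)
    (a1 μ a2 : K0) (ha1 : a1 ≠ 0) (hμ0 : μ ≠ 0)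
    (hnd : ¬ ((p : ℤ) ∣ v0 a1)) (hneg : v0 a1 < 0)
    (m : ℤ) (hm : m = -v0 μ)
    (b1 b2 : ℤ) (hb1 : b1 = -v0 a1) (hb2 : b2 = (p : ℤ) ^ 2 * m + b1)
    (hmu1 : ((p : ℤ) - 1) * ((p : ℤ) ^ 2 * m + p * b1) < (p : ℤ) ^ 2 * e0)
    (hmu2 : ((p : ℤ) ^ 2 - 1) * b1 ≤ (p : ℤ) ^ 2 * m)
    (ha2 : a2 = μ ^ p * a1)
    (x1 x2 : K2)
    (hx1 : x1 ^ p - x1 = algebraMap K0 K2 a1)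
    (hx2 : x2 ^ p - x2 = algebraMap K0 K2 a2 +
      (x1 ^ p + (algebraMap K0 K2 a1) ^ p - (x1 + algebraMap K0 K2 a1) ^ p) / (p : K2))
    (σ1 : K2 ≃ₐ[K0] K2) (ε δ' : K2)
    (hσ1x1 : σ1 x1 = x1 + 1 + ε) (hε : ε = 0 ∨ 0 ≤ v2 ε)
    (hσ1x2 : σ1 x2 = x2 + (x1 ^ p + 1 - (x1 + 1) ^ p) / (p : K2) + δ')
    (hδ' : δ' = 0 ∨ 0 ≤ v2 δ')
    (Ψ1 Ψ2 : Module.End K0 K2)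
    (hΨ2 : Ψ2 = ((σ1 ^ p).toLinearMap : Module.End K0 K2) - 1)
    (hΨ1 : Ψ1 = (σ1.toLinearMap : Module.End K0 K2) *
      (∑ i ∈ Finset.range p,
        ((∏ k ∈ Finset.range i, (μ - (k : K0))) / (Nat.factorial i : K0)) • Ψ2 ^ i) - 1)
    (π0 : K0) (hπ0 : π0 ≠ 0) (hπ0v : v0 π0 = 1)
    (ρ0 : K2) (hρ0v : ρ0 = 0 ∨ b2 % (p : ℤ) ^ 2 ≤ v2 ρ0)
    (d : ℕ → ℤ)
    (hd : ∀ a : ℕ, a < p ^ 2 →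
      d a = Int.fdiv ((1 + ((a / p : ℕ) : ℤ)) * b2 + ((a % p : ℕ) : ℤ) * (p : ℤ) * b1)
        ((p : ℤ) ^ 2))
    (Ψf : ℕ → Module.End K0 K2)
    (hΨf : ∀ a : ℕ, Ψf a = if a < p ^ 2 then Ψ2 ^ (a / p) * Ψ1 ^ (a % p) else 0)
    (ρ : K2) (hρ : ρ = algebraMap K0 K2 (π0 ^ d 0) * ρ0)
    (ρf : ℕ → K2) (hρf : ∀ a : ℕ, ρf a = algebraMap K0 K2 (π0 ^ (-d a)) * Ψf a ρ)
    (wj : ℕ → ℤ) (hwj : ∀ j : ℕ, j < p ^ 2 → wj j ≤ d j - d 0) :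
    ∀ j r : ℕ, j < p ^ 2 → r < p ^ 2 →
      ((algebraMap K0 K2 (π0 ^ (-wj j)) * Ψf j (ρf r) -
          algebraMap K0 K2 (π0 ^ (d (j + r) - d r - wj j)) * ρf (j + r) = 0) ∨
        (p : ℤ) ^ 2 * e0 - p * b2 - ((p : ℤ) ^ 2 - p + 1) * b1 ≤
          v2 (algebraMap K0 K2 (π0 ^ (-wj j)) * Ψf j (ρf r) -
          algebraMap K0 K2 (π0 ^ (d (j + r) - d r - wj j)) * ρf (j + r))) ∧
      (j % p + r % p < p ∧ j / p + r / p < p →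
        algebraMap K0 K2 (π0 ^ (-wj j)) * Ψf j (ρf r) =
          algebraMap K0 K2 (π0 ^ (d (j + r) - d r - wj j)) * ρf (j + r)) := by
  have hpK : (p : K2) ≠ 0 := by exact_mod_cast hp.ne_zero
  have hpK0 : (p : K0) ≠ 0 := fun h => hpK (by rw [← map_natCast (algebraMap K0 K2), h, map_zero])
  have hv {x : K0} (hx : x ≠ 0) := hv2.toAddValuation_algebraMap (hram x hx) hx
  have hF : IsTotallyRamified K0 hv2.toAddValuation := fun x hx =>
    ⟨v0 x, by rw [hv hx, hdeg, Nat.cast_pow]⟩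
  have hroot : IsWittRoot hv2.toAddValuation p b1 (p ^ 2 * m) (p ^ 2 * e0)
      (algebraMap K0 K2 a1) (algebraMap K0 K2 μ) x1 x2 :=
    ⟨hp, valGE_of_val_eq (by rw [← map_natCast (algebraMap K0 K2), hv hpK0, he0]), by omega,
      by rw [hv ha1, hb1, mul_neg, neg_neg], by rw [hv hμ0, hm, mul_neg, neg_neg], hmu2, hmu1, hx1,
      by rw [hx2, ha2, map_mul, map_pow, div_eq_wittD hp hpK]⟩
  have hΨ : IsScaffoldPair hv2.toAddValuation p b1 b2 (p ^ 2 * e0) Ψ1 Ψ2 := by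
    rw [hΨ1, hΨ2, hb2]
    exact hroot.isScaffoldPair hF hdeg (by rwa [hb1, Int.dvd_neg]) hσ1x1
      (hv2.valGE_toAddValuation_iff.2 hε) (by rw [hσ1x2, ← div_eq_wittD hp hpK, one_pow])
      (hv2.valGE_toAddValuation_iff.2 hδ')
  obtain rfl : Ψf = digitPow p Ψ2 Ψ1 := funext hΨf
  intro j r hj hr
  simp only [hρf]
  have hdiff := algebraMap_zpow_mul_apply_sub hπ0 (digitPow p Ψ2 Ψ1 j) (digitPow p Ψ2 Ψ1 r)
    (digitPow p Ψ2 Ψ1 (j + r)) ρ (d r) (d (j + r)) (wj j)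
  refine ⟨hv2.valGE_toAddValuation_iff.1 (hdiff ▸ hρ ▸ ?_), fun h => sub_eq_zero.1 (hdiff.trans ?_)⟩
  · exact hΨ.valGE_zpow_mul_digitPow_sub (by omega) ⟨m, by omega⟩ (by linarith)
      (by rw [hv hπ0, hπ0v, mul_one]) hd (hv2.valGE_toAddValuation_iff.2 hρ0v) hj hr (hwj j hj)
  · rw [digitPow_mul_digitPow_of_no_carry hΨ.commute hj hr h.1 h.2, sub_self,
      LinearMap.zero_apply, mul_zero]

/-- Proposition 4.4: if `p²e₀ − (p+1)b₂ + (p−1)b₁ > 0` then for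
`0 ≤ j, r < p²`,
`π₀^{−w_j}·Ψ^{(j)}·ρ_r ≡ π₀^{d_{j+r}−d_r−w_j}·ρ_{j+r} mod 𝔐₂^{p²e₀−p·b₂−(p²−p+1)·b₁}`
(note `ρ_{j+r} = 0` when `j + r ≥ p²`, since `Ψ^{(a)} = 0` for `a ≥ p²`),
with equality when there is no carry in adding the `p`-adic expansions of
`j` and `r`. -/
theorem statement17
    (p : ℕ) (hp : p.Prime)
    (K0 K2 : Type*) [Field K0] [Field K2] [CharZero K0] [CharZero K2]
    [Algebra K0 K2] [IsGalois K0 K2] [FiniteDimensional K0 K2]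
    (hdeg : Module.finrank K0 K2 = p ^ 2)
    (hcyc : IsCyclic (K2 ≃ₐ[K0] K2))
    (v0 : K0 → ℤ) (v2 : K2 → ℤ)
    (hv0 : IsDiscVal v0) (hv2 : IsDiscVal v2)
    (e0 : ℤ) (he0 : e0 = v0 (p : K0)) (he0pos : 1 ≤ e0)
    (hram : ∀ x : K0, x ≠ 0 → v2 (algebraMap K0 K2 x) = (p : ℤ) ^ 2 * v0 x)
    (a1 μ a2 : K0) (ha1 : a1 ≠ 0) (hμ0 : μ ≠ 0)
    (hwitt : ∀ y : K0, y ^ p - y ≠ a1)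
    (hnd : ¬ ((p : ℤ) ∣ v0 a1))
    (hneg : v0 a1 < 0)
    (hbd : -((p : ℤ) * e0) < ((p : ℤ) ^ 2 - 1) * v0 a1)
    (m : ℤ) (hm : m = -v0 μ) (hmpos : 0 < m)
    (hmu1 : (p : ℤ) ^ 2 * (p - 1) * m - (2 * p * (p - 1) + 1) * v0 a1 < (p : ℤ) ^ 2 * e0)
    (hmu2 : -(((p : ℤ) ^ 2 - 1) * v0 a1) < (p : ℤ) ^ 2 * m)
    (ha2 : a2 = μ ^ p * a1)
    (x1 x2 : K2)
    (hx1 : x1 ^ p - x1 = algebraMap K0 K2 a1)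
    (hx2 : x2 ^ p - x2 = algebraMap K0 K2 a2 +
      (x1 ^ p + (algebraMap K0 K2 a1) ^ p - (x1 + algebraMap K0 K2 a1) ^ p) / (p : K2))
    (hgen : Algebra.adjoin K0 {x1, x2} = ⊤)
    (b1 b2 : ℤ) (hb1 : b1 = -v0 a1) (hb2 : b2 = (p : ℤ) ^ 2 * m + b1)
    (σ1 : K2 ≃ₐ[K0] K2) (ε δ' : K2)
    (hσ1x1 : σ1 x1 = x1 + 1 + ε)
    (hε : ε ≠ 0) (hεv : v2 ε = (p : ℤ) ^ 2 * e0 - p * (p - 1) * b1)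
    (hσ1x2 : σ1 x2 = x2 + (x1 ^ p + 1 - (x1 + 1) ^ p) / (p : K2) + δ')
    (hδ' : δ' = 0 ∨ 0 < v2 δ')
    (Ψ1 Ψ2 : Module.End K0 K2)
    (hΨ2 : Ψ2 = ((σ1 ^ p).toLinearMap : Module.End K0 K2) - 1)
    (hΨ1 : Ψ1 = (σ1.toLinearMap : Module.End K0 K2) *
      (∑ i ∈ Finset.range p,
        ((∏ k ∈ Finset.range i, (μ - (k : K0))) / (Nat.factorial i : K0)) • Ψ2 ^ i) - 1)
    (π0 : K0) (hπ0 : π0 ≠ 0) (hπ0v : v0 π0 = 1)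
    (ρ0 : K2) (hρ0 : ρ0 ≠ 0) (hρ0v : v2 ρ0 = b2 % (p : ℤ) ^ 2)
    (d : ℕ → ℤ)
    (hd : ∀ a : ℕ, a < p ^ 2 →
      d a = Int.fdiv ((1 + ((a / p : ℕ) : ℤ)) * b2 + ((a % p : ℕ) : ℤ) * (p : ℤ) * b1)
        ((p : ℤ) ^ 2))
    (Ψf : ℕ → Module.End K0 K2)
    (hΨf : ∀ a : ℕ, Ψf a = if a < p ^ 2 then Ψ2 ^ (a / p) * Ψ1 ^ (a % p) else 0)
    (ρ : K2) (hρ : ρ = algebraMap K0 K2 (π0 ^ d 0) * ρ0)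
    (ρf : ℕ → K2) (hρf : ∀ a : ℕ, ρf a = algebraMap K0 K2 (π0 ^ (-d a)) * Ψf a ρ)
    (wj : ℕ → ℤ)
    (hwj : ∀ j : ℕ, j < p ^ 2 →
      IsLeast {x : ℤ | ∃ a : ℕ, a < p ^ 2 - j ∧ x = d (j + a) - d a} (wj j))
    (hbig : 0 < (p : ℤ) ^ 2 * e0 - (p + 1) * b2 + (p - 1) * b1) :
    ∀ j r : ℕ, j < p ^ 2 → r < p ^ 2 →
      ((algebraMap K0 K2 (π0 ^ (-wj j)) * Ψf j (ρf r) -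
          algebraMap K0 K2 (π0 ^ (d (j + r) - d r - wj j)) * ρf (j + r) = 0) ∨
        (p : ℤ) ^ 2 * e0 - p * b2 - ((p : ℤ) ^ 2 - p + 1) * b1 ≤
          v2 (algebraMap K0 K2 (π0 ^ (-wj j)) * Ψf j (ρf r) -
          algebraMap K0 K2 (π0 ^ (d (j + r) - d r - wj j)) * ρf (j + r))) ∧
      (j % p + r % p < p ∧ j / p + r / p < p →
        algebraMap K0 K2 (π0 ^ (-wj j)) * Ψf j (ρf r) =
          algebraMap K0 K2 (π0 ^ (d (j + r) - d r - wj j)) * ρf (j + r)) := by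
  have hp1 : (0 : ℤ) ≤ p - 1 := sub_nonneg.2 (by exact_mod_cast hp.one_le)
  have hb1pos : 0 < b1 := by omega
  have hpb : 0 ≤ p * (p - 1) * b1 := by positivity
  have hpm : 0 ≤ p ^ 2 * (p - 1) * m := by positivity
  rw [show v0 a1 = -b1 by omega] at hmu1 hmu2
  exact statement17_general p hp K0 K2 hdeg v0 v2 hv2 e0 he0 hram a1 μ a2 ha1 hμ0 hnd hneg m hm
    b1 b2 hb1 hb2 (by linarith) (by linarith) ha2 x1 x2 hx1 hx2 σ1 ε δ' hσ1x1
    (.inr (by linarith)) hσ1x2 (hδ'.imp_right le_of_lt) Ψ1 Ψ2 hΨ2 hΨ1 π0 hπ0 hπ0v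
    ρ0 (.inr hρ0v.ge) d hd Ψf hΨf ρ hρ ρf hρf wj
    fun j hj => (hwj j hj).2 ⟨0, by omega, by rw [add_zero]⟩
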